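/- Finite double shuffle relations for non-strict multiple zeta values: for all w1, w2 ∈ H^0 one has Z̄(w1 *̄ w2 − w1 ш̄ w2) = 0. -/

import Mathlib

open scoped BigOperators

/-- The two-letter alphabet {x, y}. -/
inductive Letter : Type
  | x : Letter
  | y : Letter
deriving DecidableEq

/-- `H = ℚ⟨x,y⟩`, the noncommutative polynomial ring over ℚ in two
indeterminates, realized as the monoid algebra of the free monoid on `{x,y}`. -/
abbrev H : Type := MonoidAlgebra ℚ (FreeMonoid Letter)

namespace H

/-- The monomial (word) of `H` corresponding to an element of the free monoid. -/
noncomputable def word (w : FreeMonoid Letter) : H := MonoidAlgebra.single w 1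

/-- The generator `x`. -/
noncomputable def X : H := word (FreeMonoid.of Letter.x)

/-- The generator `y`. -/
noncomputable def Y : H := word (FreeMonoid.of Letter.y)

/-- The word `z_k = x^{k-1} y` (for `k ≥ 1`). -/
def zW (k : ℕ) : FreeMonoid Letter :=
  FreeMonoid.ofList (List.replicate (k - 1) Letter.x ++ [Letter.y])

/-- `z_k = x^{k-1} y` as an element of `H`. -/
noncomputable def z (k : ℕ) : H := word (zW k)

/-- A list `[k₁,…,kₙ]` gives the word `z_{k₁} z_{k₂} ⋯ z_{kₙ}`. -/
def zListW (ks : List ℕ) : FreeMonoid Letter :=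
  FreeMonoid.ofList (ks.flatMap fun k => List.replicate (k - 1) Letter.x ++ [Letter.y])

/-- `H¹ = ℚ + Hy` as a ℚ-submodule of `H`. -/
noncomputable def H1 : Submodule ℚ H :=
  LinearMap.range (LinearMap.mulRight ℚ Y) ⊔ Submodule.span ℚ {1}

/-- `H⁰ = ℚ + xHy` as a ℚ-submodule of `H`. -/
noncomputable def H0 : Submodule ℚ H :=
  LinearMap.range ((LinearMap.mulRight ℚ Y).comp (LinearMap.mulLeft ℚ X)) ⊔
    Submodule.span ℚ {1}

/-- Parse a word of `H¹` into the exponent list of its `z`-decomposition: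
`z_{k₁}⋯z_{kₙ} ↦ [k₁,…,kₙ]` (auxiliary accumulator version). -/
def toZAux : List Letter → ℕ → List ℕ
  | [], _ => []
  | Letter.x :: r, n => toZAux r (n + 1)
  | Letter.y :: r, n => (n + 1) :: toZAux r 0

/-- The `z`-decomposition of a word of `H¹`. -/
def toZ (w : FreeMonoid Letter) : List ℕ := toZAux (FreeMonoid.toList w) 0

/-- The harmonic product on words of `H¹` (via `z`-decompositions):
`1 * w = w * 1 = w` and
`z_k w₁ * z_l w₂ = z_k (w₁ * z_l w₂) + z_l (z_k w₁ * w₂) + z_{k+l} (w₁ * w₂)`. -/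
noncomputable def harmW : List ℕ → List ℕ → H
  | [], w => word (zListW w)
  | k :: w1, [] => word (zListW (k :: w1))
  | k :: w1, l :: w2 =>
      z k * harmW w1 (l :: w2) + z l * harmW (k :: w1) w2 + z (k + l) * harmW w1 w2
termination_by w1 w2 => w1.length + w2.length
decreasing_by all_goals simp [Nat.lt_succ_iff] <;> omega

/-- The n-harmonic product on words of `H¹`:
`1 *̄ w = w *̄ 1 = w` and
`z_k w₁ *̄ z_l w₂ = z_k (w₁ *̄ z_l w₂) + z_l (z_k w₁ *̄ w₂) − z_{k+l} (w₁ *̄ w₂)`. -/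
noncomputable def nharmW : List ℕ → List ℕ → H
  | [], w => word (zListW w)
  | k :: w1, [] => word (zListW (k :: w1))
  | k :: w1, l :: w2 =>
      z k * nharmW w1 (l :: w2) + z l * nharmW (k :: w1) w2 - z (k + l) * nharmW w1 w2
termination_by w1 w2 => w1.length + w2.length
decreasing_by all_goals simp [Nat.lt_succ_iff] <;> omega

/-- The harmonic product `*` on `H¹`, extended ℚ-bilinearly. -/
noncomputable def harm (a b : H) : H :=
  Finsupp.sum a.coeff fun w1 c1 =>
    Finsupp.sum b.coeff fun w2 c2 => (c1 * c2) • harmW (toZ w1) (toZ w2)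

/-- The n-harmonic product `*̄` on `H¹`, extended ℚ-bilinearly. -/
noncomputable def nharm (a b : H) : H :=
  Finsupp.sum a.coeff fun w1 c1 =>
    Finsupp.sum b.coeff fun w2 c2 => (c1 * c2) • nharmW (toZ w1) (toZ w2)

/-- The letter exchange `τ(x) = y`, `τ(y) = x`. -/
def τ : Letter → Letter
  | Letter.x => Letter.y
  | Letter.y => Letter.x

/-- `δ(w) = 1` if `w` is the empty word, `0` otherwise. -/
def δ : List Letter → ℚ
  | [] => 1
  | _ :: _ => 0

/-- The shuffle product on words:
`1 ш w = w ш 1 = w` and `u₁w₁ ш u₂w₂ = u₁(w₁ ш u₂w₂) + u₂(u₁w₁ ш w₂)`. -/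
noncomputable def shW : List Letter → List Letter → H
  | [], w => word (FreeMonoid.ofList w)
  | u :: w, [] => word (FreeMonoid.ofList (u :: w))
  | u1 :: w1, u2 :: w2 =>
      word (FreeMonoid.of u1) * shW w1 (u2 :: w2) +
        word (FreeMonoid.of u2) * shW (u1 :: w1) w2
termination_by w1 w2 => w1.length + w2.length
decreasing_by all_goals simp [Nat.lt_succ_iff]

/-- The n-shuffle product on words: `1 ш̄ w = w ш̄ 1 = w` and
`u₁w₁ ш̄ u₂w₂ = u₁(w₁ ш̄ u₂w₂) + u₂(u₁w₁ ш̄ w₂) − δ(w₁)τ(u₁)u₂w₂ − δ(w₂)τ(u₂)u₁w₁`. -/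
noncomputable def nshW : List Letter → List Letter → H
  | [], w => word (FreeMonoid.ofList w)
  | u :: w, [] => word (FreeMonoid.ofList (u :: w))
  | u1 :: w1, u2 :: w2 =>
      word (FreeMonoid.of u1) * nshW w1 (u2 :: w2) +
        word (FreeMonoid.of u2) * nshW (u1 :: w1) w2 -
        δ w1 • word (FreeMonoid.ofList (τ u1 :: u2 :: w2)) -
        δ w2 • word (FreeMonoid.ofList (τ u2 :: u1 :: w1))
termination_by w1 w2 => w1.length + w2.length
decreasing_by all_goals simp [Nat.lt_succ_iff]

/-- The shuffle product `ш` on `H`, extended ℚ-bilinearly. -/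
noncomputable def sh (a b : H) : H :=
  Finsupp.sum a.coeff fun w1 c1 =>
    Finsupp.sum b.coeff fun w2 c2 =>
      (c1 * c2) • shW (FreeMonoid.toList w1) (FreeMonoid.toList w2)

/-- The n-shuffle product `ш̄` on `H`, extended ℚ-bilinearly. -/
noncomputable def nsh (a b : H) : H :=
  Finsupp.sum a.coeff fun w1 c1 =>
    Finsupp.sum b.coeff fun w2 c2 =>
      (c1 * c2) • nshW (FreeMonoid.toList w1) (FreeMonoid.toList w2)

/-- `S₁`: the ℚ-algebra endomorphism of `H` with `S₁(x) = x`, `S₁(y) = x + y`. -/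
noncomputable def S1 : H →ₐ[ℚ] H :=
  MonoidAlgebra.lift ℚ H (FreeMonoid Letter)
    (FreeMonoid.lift fun u => match u with
      | Letter.x => X
      | Letter.y => X + Y)

/-- `S₂`: the ℚ-algebra endomorphism of `H` with `S₂(x) = x`, `S₂(y) = y − x`. -/
noncomputable def S2 : H →ₐ[ℚ] H :=
  MonoidAlgebra.lift ℚ H (FreeMonoid Letter)
    (FreeMonoid.lift fun u => match u with
      | Letter.x => X
      | Letter.y => Y - X)

/-- `S` on a word: `S(1) = 1` and `S(Fy) = S₁(F)y`. -/
noncomputable def SW (w : FreeMonoid Letter) : H :=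
  match (FreeMonoid.toList w).getLast? with
  | some Letter.y =>
      S1 (word (FreeMonoid.ofList (FreeMonoid.toList w).dropLast)) * Y
  | _ => word w

/-- The ℚ-linear map `S : H¹ → H¹` with `S(1) = 1`, `S(Fy) = S₁(F)y`. -/
noncomputable def S (a : H) : H := Finsupp.sum a.coeff fun w c => c • SW w

/-- `S̃` on a word: `S̃(1) = 1` and `S̃(Fy) = S₂(F)y`. -/
noncomputable def StW (w : FreeMonoid Letter) : H :=
  match (FreeMonoid.toList w).getLast? with
  | some Letter.y =>
      S2 (word (FreeMonoid.ofList (FreeMonoid.toList w).dropLast)) * Y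
  | _ => word w

/-- The ℚ-linear map `S̃ : H¹ → H¹` with `S̃(1) = 1`, `S̃(Fy) = S₂(F)y`. -/
noncomputable def St (a : H) : H := Finsupp.sum a.coeff fun w c => c • StW w

/-- The multiple zeta value `ζ(k₁,…,kₙ)`: the sum over strictly decreasing
tuples `m₁ > m₂ > ⋯ > mₙ > 0` of `1/(m₁^{k₁}⋯mₙ^{kₙ})`. -/
noncomputable def mzeta (ks : List ℕ) : ℝ :=
  ∑' m : {f : Fin ks.length → ℕ // (∀ i, 0 < f i) ∧
      ∀ i j : Fin ks.length, i < j → f j < f i},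
    ∏ i : Fin ks.length, ((m.1 i : ℝ) ^ ks.get i)⁻¹

/-- The non-strict multiple zeta value `ζ̄(k₁,…,kₙ)`: the sum over weakly
decreasing tuples `m₁ ≥ m₂ ≥ ⋯ ≥ mₙ > 0` of `1/(m₁^{k₁}⋯mₙ^{kₙ})`. -/
noncomputable def nmzeta (ks : List ℕ) : ℝ :=
  ∑' m : {f : Fin ks.length → ℕ // (∀ i, 0 < f i) ∧
      ∀ i j : Fin ks.length, i ≤ j → f j ≤ f i},
    ∏ i : Fin ks.length, ((m.1 i : ℝ) ^ ks.get i)⁻¹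

/-- The evaluation map `Z : H⁰ → ℝ`, `Z(1) = 1`,
`Z(z_{k₁}⋯z_{kₙ}) = ζ(k₁,…,kₙ)` (extended ℚ-linearly to `H`). -/
noncomputable def Z (a : H) : ℝ := Finsupp.sum a.coeff fun w c => (c : ℝ) * mzeta (toZ w)

/-- The n-evaluation map `Z̄ : H⁰ → ℝ`, `Z̄(1) = 1`,
`Z̄(z_{k₁}⋯z_{kₙ}) = ζ̄(k₁,…,kₙ)` (extended ℚ-linearly to `H`). -/
noncomputable def Zbar (a : H) : ℝ := Finsupp.sum a.coeff fun w c => (c : ℝ) * nmzeta (toZ w)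

/-- `i`-fold n-harmonic power: `a^{*̄ 0} = 1`, `a^{*̄ (i+1)} = a *̄ a^{*̄ i}`. -/
noncomputable def nharmPow : ℕ → H → H
  | 0, _ => 1
  | i + 1, a => nharm a (nharmPow i a)

/-- `i`-fold n-shuffle power: `a^{ш̄ 0} = 1`, `a^{ш̄ (i+1)} = a ш̄ a^{ш̄ i}`. -/
noncomputable def nshPow : ℕ → H → H
  | 0, _ => 1
  | i + 1, a => nsh a (nshPow i a)

end H

open H
namespace NSDS
open Letter

/-- linear extension of a function on words -/
noncomputable def lin {M : Type} [AddCommGroup M] [Module ℚ M] (f : FreeMonoid Letter → M) :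
    H →ₗ[ℚ] M :=
  (Finsupp.linearCombination ℚ f).comp (MonoidAlgebra.coeffLinearEquiv ℚ).toLinearMap

lemma lin_apply {M : Type} [AddCommGroup M] [Module ℚ M] (f : FreeMonoid Letter → M) (h : H) :
    lin f h = h.coeff.sum fun w c => c • f w := rfl

lemma lin_word {M : Type} [AddCommGroup M] [Module ℚ M] (f : FreeMonoid Letter → M) (w) :
    lin f (word w) = f w := by
  simp [lin_apply, word]

lemma word_mul (a b : FreeMonoid Letter) : word a * word b = word (a * b) := by
  simp [word, MonoidAlgebra.single_mul_single]

lemma word_one : word 1 = 1 := rfl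

/-- two linear maps on H agreeing on words agree -/
lemma lin_ext {M : Type} [AddCommGroup M] [Module ℚ M] {f g : H →ₗ[ℚ] M}
    (hfg : ∀ w, f (word w) = g (word w)) : f = g := by
  have : ∀ h : H, f h = g h := by
    intro h
    induction h using MonoidAlgebra.induction_linear with
    | zero => simp
    | add a b ha hb => simp [ha, hb]
    | single w c =>
      have : MonoidAlgebra.single w c = c • word w := by simp [word]
      rw [this, map_smul, map_smul, hfg]
  exact LinearMap.ext this

lemma Zbar_eq (h : H) : Zbar h = lin (fun w => nmzeta (toZ w)) h := by
  rw [lin_apply]; unfold Zbar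
  simp only [Rat.smul_def]

/-- coefficients of the non-strict polylogarithm -/
noncomputable def cf : List Letter → ℕ → ℝ
  | [], m => if m = 0 then 1 else 0
  | Letter.x :: w, m => cf w m / m
  | Letter.y :: w, m => (∑ j ∈ Finset.range (m+1), cf w j) / m

noncomputable def pl (w : FreeMonoid Letter) : PowerSeries ℝ := PowerSeries.mk (cf w.toList)

noncomputable def Lm : H →ₗ[ℚ] PowerSeries ℝ := lin pl

noncomputable def gl : Letter → PowerSeries ℝ
  | Letter.x => 1
  | Letter.y => PowerSeries.mk 1

noncomputable def θ : PowerSeries ℝ →ₗ[ℝ] PowerSeries ℝ :=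
  (LinearMap.mulLeft ℝ PowerSeries.X).comp (PowerSeries.derivative ℝ).toLinearMap

lemma θ_apply (f) : θ f = PowerSeries.X * PowerSeries.derivative ℝ f := rfl

lemma θ_mul (f g) : θ (f * g) = θ f * g + f * θ g := by
  simp only [θ_apply, Derivation.leibniz, smul_eq_mul]; ring

lemma coeff_θ (f n) : PowerSeries.coeff n (θ f) = n * PowerSeries.coeff n f := by
  rw [θ_apply]
  cases n with
  | zero => simp
  | succ n =>
    rw [PowerSeries.coeff_succ_X_mul, PowerSeries.coeff_derivative]; push_cast; ring

lemma θ_inj {f g} (h : θ f = θ g)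
    (h0 : PowerSeries.constantCoeff f = PowerSeries.constantCoeff g) : f = g := by
  ext n
  rcases Nat.eq_zero_or_pos n with rfl | hn
  · simpa using h0
  · have := congrArg (PowerSeries.coeff n) h
    rw [coeff_θ, coeff_θ] at this
    exact mul_left_cancel₀ (by positivity) this

lemma coeff_gy (f : PowerSeries ℝ) (n : ℕ) : PowerSeries.coeff n (gl y * f)
    = ∑ j ∈ Finset.range (n+1), PowerSeries.coeff j f := by
  rw [mul_comm, PowerSeries.coeff_mul, Finset.Nat.sum_antidiagonal_eq_sum_range_succ_mk]
  simp [gl]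

lemma Lm_word (w) : Lm (word w) = pl w := lin_word _ _

lemma cf_zero_cons (u w) : cf (u :: w) 0 = 0 := by cases u <;> simp [cf]

lemma pl_cons (u : Letter) (w : FreeMonoid Letter) :
    θ (pl (FreeMonoid.of u * w)) = gl u * pl w - PowerSeries.C (PowerSeries.constantCoeff (pl w)) := by
  ext n
  rw [coeff_θ, map_sub]
  have hp : ∀ v, PowerSeries.coeff n (pl v) = cf v.toList n := fun v => by simp [pl]
  rw [hp]
  have hl : (FreeMonoid.of u * w).toList = u :: w.toList := rfl
  rw [hl, PowerSeries.coeff_C]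
  rcases Nat.eq_zero_or_pos n with rfl | hn
  · cases u <;> simp [gl, cf]
  · have : (n : ℝ) ≠ 0 := by positivity
    rw [if_neg hn.ne']
    cases u
    · simp [gl, cf, hp]; field_simp
    · rw [coeff_gy]; simp [cf, pl]; field_simp

lemma θ_Lm (u : Letter) (h : H) : θ (Lm (word (FreeMonoid.of u) * h)) =
    gl u * Lm h - PowerSeries.C (PowerSeries.constantCoeff (Lm h)) := by
  let A : H →ₗ[ℚ] PowerSeries ℝ :=
    (θ.restrictScalars ℚ).comp (Lm.comp (LinearMap.mulLeft ℚ (word (FreeMonoid.of u))))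
  let B : H →ₗ[ℚ] PowerSeries ℝ :=
    ((LinearMap.mulLeft ℝ (gl u)).restrictScalars ℚ).comp Lm -
    (((Algebra.linearMap ℝ (PowerSeries ℝ)).comp (PowerSeries.coeff (R := ℝ) 0)).restrictScalars ℚ).comp Lm
  have : A = B := by
    apply lin_ext
    intro w
    simp [A, B, Lm_word, word_mul, pl_cons, PowerSeries.algebraMap_apply]
  have := LinearMap.congr_fun this h
  simpa [A, B, PowerSeries.algebraMap_apply] using this

lemma cc_Lm (u : Letter) (h : H) : PowerSeries.constantCoeff (Lm (word (FreeMonoid.of u) * h)) = 0 := by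
  let A : H →ₗ[ℚ] ℝ :=
    ((PowerSeries.coeff (R := ℝ) 0).restrictScalars ℚ).comp (Lm.comp (LinearMap.mulLeft ℚ (word (FreeMonoid.of u))))
  have : A = 0 := by
    apply lin_ext
    intro w
    simp [A, Lm_word, word_mul, pl, cf_zero_cons, ← PowerSeries.coeff_zero_eq_constantCoeff_apply]
  have := LinearMap.congr_fun this h
  simpa [A] using this

/-- empty or ending in y -/
def Good (w : List Letter) : Prop := w = [] ∨ ∃ v, w = v ++ [y]

lemma Good.tail {u w} (h : Good (u :: w)) : Good w := by
  rcases h with h | ⟨v, h⟩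
  · simp at h
  · cases v with
    | nil => left; simp at h; exact h.2
    | cons a v => right; exact ⟨v, by simp at h; exact h.2⟩

lemma Good.single {u} (h : Good [u]) : u = y := by
  rcases h with h | ⟨v, h⟩
  · simp at h
  · cases v <;> simp at h; exact h

noncomputable abbrev wl (w : List Letter) : H := word (FreeMonoid.ofList w)

lemma wl_cons (u w) : wl (u :: w) = word (FreeMonoid.of u) * wl w := by
  rw [word_mul]; rfl

lemma cc_wl (w) : PowerSeries.constantCoeff (Lm (wl w)) = if w = [] then 1 else 0 := by
  cases w with
  | nil => simp [Lm_word, pl, cf, ← PowerSeries.coeff_zero_eq_constantCoeff_apply]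
  | cons u w => rw [wl_cons, cc_Lm]; simp

lemma Lm_nil : Lm (wl []) = 1 := by
  ext n; simp [Lm_word, pl, cf, PowerSeries.coeff_one]

lemma δ_eq (w) : δ w = if w = [] then 1 else 0 := by cases w <;> simp [δ]

theorem shuffle (n : ℕ) : ∀ a b : List Letter, a.length + b.length ≤ n → Good a → Good b →
    Lm (nshW a b) = Lm (wl a) * Lm (wl b) := by
  induction n with
  | zero =>
    intro a b h _ _
    have ha : a = [] := by apply List.eq_nil_of_length_eq_zero; omega
    have hb : b = [] := by apply List.eq_nil_of_length_eq_zero; omega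
    subst ha hb
    rw [nshW, Lm_nil]; simpa using Lm_nil
  | succ n ih =>
    intro a b h ga gb
    match a, b with
    | [], b => rw [nshW, Lm_nil, one_mul]
    | u :: w, [] => rw [nshW, Lm_nil, mul_one]
    | u :: w, v :: t =>
      simp only [List.length_cons] at h
      have i1 := ih w (v :: t) (by simp; omega) ga.tail gb
      have i2 := ih (u :: w) t (by simp; omega) ga gb.tail
      have key : ∀ (u v : Letter) (w t : List Letter), Good (u :: w) →
          Lm (δ w • wl (τ u :: v :: t)) = Lm (δ w • wl (x :: v :: t)) := by
        intro u v w t h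
        rw [δ_eq]
        split_ifs with hw
        · subst hw; rw [h.single]; rfl
        · simp
      have θδ : ∀ (w t : List Letter) v, θ (Lm (δ w • wl (x :: v :: t))) =
          PowerSeries.C (PowerSeries.constantCoeff (Lm (wl w))) * Lm (wl (v :: t)) := by
        intro w t v
        rw [cc_wl, δ_eq]
        split_ifs
        · rw [one_smul, wl_cons, θ_Lm, cc_wl]; simp [gl]
        · simp
      have ccδ : ∀ (w t : List Letter) v,
          PowerSeries.constantCoeff (Lm (δ w • wl (x :: v :: t))) = 0 := by
        intro w t v
        rw [δ_eq]
        split_ifs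
        · rw [one_smul, cc_wl]; simp
        · simp
      rw [nshW, map_sub, map_sub, map_add, key u v w t ga, key v u t w gb]
      apply θ_inj
      · rw [map_sub, map_sub, map_add, θ_Lm, θ_Lm, θδ, θδ, i1, i2, θ_mul, wl_cons u w, wl_cons v t,
          θ_Lm, θ_Lm]
        simp [cc_Lm]
        ring
      · rw [map_sub, map_sub, map_add, cc_Lm, cc_Lm, ccδ, ccδ, map_mul, cc_wl]
        simp
end NSDS
namespace NSDS
open Letter

lemma cf_nonneg (w m) : 0 ≤ cf w m := by
  induction w generalizing m with
  | nil => simp [cf]; split_ifs <;> norm_num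
  | cons u w ih =>
    cases u
    · simp only [cf]; exact div_nonneg (ih m) (by positivity)
    · simp only [cf]; exact div_nonneg (Finset.sum_nonneg fun j _ => ih j) (by positivity)

def zl (ks : List ℕ) : List Letter := ks.flatMap fun k => List.replicate (k - 1) Letter.x ++ [Letter.y]

lemma zl_cons (k ks) : zl (k :: ks) = List.replicate (k-1) x ++ y :: zl ks := by
  simp [zl]

lemma cf_rep (n w m) : cf (List.replicate n x ++ y :: w) m =
    ((m : ℝ)^(n+1))⁻¹ * ∑ j ∈ Finset.range (m+1), cf w j := by
  induction n with
  | zero => simp [cf]; ring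
  | succ n ih =>
    rw [List.replicate_succ, List.cons_append, cf, ih, pow_succ (m:ℝ) (n+1), mul_inv]; ring

lemma cf_z {k : ℕ} (hk : 1 ≤ k) (ks m) : cf (zl (k :: ks)) m =
    ((m : ℝ)^k)⁻¹ * ∑ j ∈ Finset.range (m+1), cf (zl ks) j := by
  rw [zl_cons, cf_rep, Nat.sub_add_cancel hk]

lemma zl_toZAux (w : List Letter) (hw : Good w) (n : ℕ) :
    (w = [] ∧ toZAux w n = []) ∨ (w ≠ [] ∧ zl (toZAux w n) = List.replicate n x ++ w) := by
  induction w generalizing n with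
  | nil => left; simp [toZAux]
  | cons u w ih =>
    right
    refine ⟨by simp, ?_⟩
    cases u
    · rcases ih hw.tail (n+1) with ⟨h, _⟩ | ⟨_, h⟩
      · subst h; have := hw.single; simp at this
      · rw [toZAux, h]; simp [List.replicate_succ']
    · rw [toZAux, zl_cons]
      rcases ih hw.tail 0 with ⟨h, h'⟩ | ⟨_, h⟩
      · subst h; simp [toZAux, zl]
      · rw [h]; simp

lemma zl_toZ (w : FreeMonoid Letter) (hw : Good w.toList) : zl (toZ w) = w.toList := by
  rcases zl_toZAux _ hw 0 with ⟨h, h'⟩ | ⟨_, h⟩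
  · rw [H.toZ, h', h]; rfl
  · rw [H.toZ, h]; simp

lemma toZAux_pos (w : List Letter) (n : ℕ) : ∀ k ∈ toZAux w n, 1 ≤ k := by
  induction w generalizing n with
  | nil => simp [toZAux]
  | cons u w ih =>
    cases u
    · rw [toZAux]; exact ih _
    · rw [toZAux]; intro k hk
      rcases List.mem_cons.1 hk with rfl | hk
      · omega
      · exact ih _ k hk

def Adm {n : ℕ} (f : Fin n → ℕ) : Prop := (∀ i, 0 < f i) ∧ ∀ i j : Fin n, i ≤ j → f j ≤ f i

open scoped ENNReal Classical in
noncomputable def E (ks : List ℕ) (N : ℕ∞) : ℝ≥0∞ :=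
  ∑' f : Fin ks.length → ℕ, if Adm f ∧ ∀ i, (f i : ℕ∞) ≤ N then
    ENNReal.ofReal (∏ i : Fin ks.length, ((f i : ℝ) ^ ks.get i)⁻¹) else 0

lemma E_nil (N) : E [] N = 1 := by
  unfold E
  rw [tsum_eq_single (fun i : Fin ([] : List ℕ).length => 0)]
  · simp [Adm]
  · intro b hb; exact absurd (funext fun i => Fin.elim0 i) hb

lemma Adm_cons {n : ℕ} (m : ℕ) (g : Fin n → ℕ) (N : ℕ∞) :
    (Adm (Fin.cons m g : Fin (n+1) → ℕ) ∧ ∀ i, (((Fin.cons m g : Fin (n+1) → ℕ) i : ℕ) : ℕ∞) ≤ N) ↔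
      (0 < m ∧ (m : ℕ∞) ≤ N) ∧ (Adm g ∧ ∀ i, (g i : ℕ∞) ≤ (m : ℕ∞)) := by
  unfold Adm
  constructor
  · rintro ⟨⟨h1, h2⟩, h3⟩
    refine ⟨⟨by simpa using h1 0, by simpa using h3 0⟩, ⟨fun i => by simpa using h1 i.succ,
      fun i j hij => by simpa using h2 i.succ j.succ (by simpa using hij)⟩, fun i => ?_⟩
    simpa using h2 0 i.succ (Fin.zero_le _)
  · rintro ⟨⟨h1, h2⟩, ⟨h3, h4⟩, h5⟩
    refine ⟨⟨fun i => ?_, fun i j hij => ?_⟩, fun i => ?_⟩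
    · refine Fin.cases ?_ (fun i => ?_) i
      · simpa using h1
      · simpa using h3 i
    · revert hij
      refine Fin.cases ?_ (fun i => ?_) i
      · refine Fin.cases ?_ (fun j => ?_) j
        · simp
        · intro _; simpa using h5 j
      · refine Fin.cases ?_ (fun j => ?_) j
        · intro h; simp at h
        · intro h; simpa using h4 i j (by simpa using h)
    · refine Fin.cases ?_ (fun i => ?_) i
      · simpa using h2
      · simpa using (h5 i).trans h2

open scoped Classical in
lemma E_cons (k ks N) : E (k :: ks) N = ∑' m : ℕ, if 0 < m ∧ (m : ℕ∞) ≤ N then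
    ENNReal.ofReal ((m : ℝ)^k)⁻¹ * E ks m else 0 := by
  unfold E
  refine ((Fin.consEquiv (fun _ : Fin (ks.length+1) => ℕ)).tsum_eq _).symm.trans ?_
  rw [ENNReal.tsum_prod']
  congr 1; ext m
  split_ifs with hm
  · rw [← ENNReal.tsum_mul_left]
    congr 1; ext g
    have := Adm_cons m g N
    rw [mul_ite, mul_zero]
    refine if_congr ?_ ?_ rfl
    · exact this.trans (by simp [hm])
    · rw [← ENNReal.ofReal_mul (by positivity)]
      congr 1
      exact (Fin.prod_univ_succ _).trans (by simp [Fin.consEquiv])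
  · rw [ENNReal.tsum_eq_zero]
    intro g
    rw [if_neg]
    intro h
    exact hm ((Adm_cons m g N).1 h).1

lemma E_nat (ks : List ℕ) (hks : ∀ k ∈ ks, 1 ≤ k) (N : ℕ) :
    E ks N = ENNReal.ofReal (∑ j ∈ Finset.range (N+1), cf (zl ks) j) := by
  induction ks generalizing N with
  | nil => rw [E_nil]; simp [zl, cf]
  | cons k ks ih =>
    rw [E_cons, ENNReal.ofReal_sum_of_nonneg (fun j _ => cf_nonneg _ _),
      tsum_eq_sum (s := Finset.range (N+1))]
    · apply Finset.sum_congr rfl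
      intro m hm
      have hk : 1 ≤ k := hks k (by simp)
      rw [cf_z hk, ENNReal.ofReal_mul (by positivity), ih (fun k hk => hks k (by simp [hk]))]
      split_ifs with h
      · rfl
      · have : m = 0 := by
          by_contra h0
          apply h
          refine ⟨Nat.pos_of_ne_zero h0, ?_⟩
          have := Finset.mem_range.1 hm
          exact_mod_cast (by omega : m ≤ N)
        subst this
        simp [show k ≠ 0 by omega]
    · intro m hm
      rw [if_neg]
      rintro ⟨_, h⟩
      apply hm
      have : m ≤ N := by exact_mod_cast h
      simp; omega

lemma E_top (ks : List ℕ) (hks : ∀ k ∈ ks, 1 ≤ k) :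
    E ks ⊤ = ∑' m, ENNReal.ofReal (cf (zl ks) m) := by
  cases ks with
  | nil =>
    rw [E_nil, tsum_eq_single 0]
    · simp [zl, cf]
    · intro m hm; simp [zl, cf, hm]
  | cons k ks =>
    rw [E_cons]
    congr 1; ext m
    have hk : 1 ≤ k := hks k (by simp)
    rw [cf_z hk, ENNReal.ofReal_mul (by positivity), E_nat _ (fun k hk => hks k (by simp [hk]))]
    split_ifs with h
    · rfl
    · have : m = 0 := by simpa using h
      subst this
      simp [show k ≠ 0 by omega]

lemma nmzeta_E (ks) : nmzeta ks = (E ks ⊤).toReal := by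
  classical
  unfold E
  rw [ENNReal.tsum_toReal_eq]
  · unfold nmzeta
    rw [← tsum_subtype_eq_of_support_subset (s := {f : Fin ks.length → ℕ | Adm f})]
    · apply tsum_congr
      rintro ⟨f, hf⟩
      have hf' : Adm f := hf
      simp only [le_top, implies_true, and_true, if_pos hf']
      rw [ENNReal.toReal_ofReal (by positivity)]
    · intro f hf
      by_contra h
      apply hf
      have h' : ¬ Adm f := h
      simp [h']
  · intro f; split_ifs <;> simp

lemma nmzeta_eq (ks : List ℕ) (hks : ∀ k ∈ ks, 1 ≤ k) : nmzeta ks = ∑' m, cf (zl ks) m := by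
  rw [nmzeta_E, E_top ks hks, ENNReal.tsum_toReal_eq (by simp)]
  apply tsum_congr
  intro m
  rw [ENNReal.toReal_ofReal (cf_nonneg _ _)]

/-- Harmonic numbers over `ℝ` -/
noncomputable def hn (m : ℕ) : ℝ := ∑ j ∈ Finset.range (m+1), (1:ℝ) / j

lemma hn_mono {a b : ℕ} (h : a ≤ b) : hn a ≤ hn b := by
  unfold hn
  apply Finset.sum_le_sum_of_subset_of_nonneg
  · intro i; simp; omega
  · intros; positivity

lemma hn_nonneg (a : ℕ) : 0 ≤ hn a := Finset.sum_nonneg fun _ _ => by positivity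

lemma one_le_hn {m : ℕ} (h : 1 ≤ m) : 1 ≤ hn m := by
  refine le_trans ?_ (hn_mono h)
  simp [hn, Finset.sum_range_succ]

lemma hn_le (m : ℕ) : hn m ≤ 1 + Real.log m := by
  refine le_trans (le_of_eq ?_) (harmonic_le_one_add_log m)
  unfold hn harmonic
  rw [Finset.sum_range_succ']
  simp

lemma cf_bound (w : List Letter) (hw : w ≠ []) (m : ℕ) : cf w m ≤ hn m ^ w.length / m := by
  induction w generalizing m with
  | nil => simp at hw
  | cons u w ih =>
    rcases Nat.eq_zero_or_pos m with rfl | hm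
    · rw [cf_zero_cons]; simp
    have hm1 : (1:ℝ) ≤ m := by exact_mod_cast hm
    have h1 := one_le_hn hm
    by_cases hw0 : w = []
    · subst hw0
      cases u
      · simp [cf, hm.ne']; exact div_nonneg (hn_nonneg _) (by positivity)
      · simp only [cf]; gcongr; simpa [cf] using h1
    · have ih' := ih hw0
      cases u
      · simp only [cf, List.length_cons]
        gcongr
        calc cf w m ≤ hn m ^ w.length / m := ih' m
          _ ≤ hn m ^ w.length := div_le_self (by positivity) hm1
          _ ≤ _ := pow_le_pow_right₀ h1 (by omega)
      · simp only [cf, List.length_cons]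
        gcongr
        calc ∑ j ∈ Finset.range (m+1), cf w j
            ≤ ∑ j ∈ Finset.range (m+1), hn m ^ w.length * (1 / (j:ℝ)) := by
              apply Finset.sum_le_sum
              intro j hj
              refine (ih' j).trans ?_
              rw [div_eq_mul_one_div]
              gcongr
              · exact hn_nonneg _
              · exact hn_mono (by simp at hj; omega)
          _ = _ := by rw [← Finset.mul_sum, pow_succ]; rfl

lemma cf_summable (w : List Letter) (hw : w ≠ []) : Summable (cf (x :: w)) := by
  have hO : (fun m : ℕ => cf (x :: w) m) =O[Filter.atTop] fun m : ℕ => (m:ℝ)^(-(3/2) : ℝ) := by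
    have h1 : (fun t : ℝ => (1 + Real.log t)^w.length) =O[Filter.atTop] fun t : ℝ => t ^ (1/2:ℝ) := by
      have h2 : (fun t : ℝ => (1 + Real.log t)^w.length) =O[Filter.atTop]
          fun t : ℝ => Real.log t ^ w.length := by
        apply Asymptotics.IsBigO.pow
        apply Asymptotics.IsBigO.add _ (Asymptotics.isBigO_refl _ _)
        exact (Real.isLittleO_const_log_atTop).isBigO
      refine h2.trans ?_
      have := (isLittleO_log_rpow_rpow_atTop (s := 1/2) (w.length : ℝ) (by norm_num)).isBigO
      simpa using this
    have h3 := h1.comp_tendsto tendsto_natCast_atTop_atTop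
    have h4 := h3.mul (Asymptotics.isBigO_refl (fun m : ℕ => (m:ℝ)^(-2:ℝ)) Filter.atTop)
    refine Asymptotics.IsBigO.trans ?_ (h4.trans (Asymptotics.IsBigO.of_bound 1 ?_))
    · refine Asymptotics.IsBigO.of_bound 1 ?_
      filter_upwards [Filter.eventually_ge_atTop 1] with m hm
      have hm0 : (0:ℝ) < m := by exact_mod_cast hm
      rw [one_mul, Real.norm_of_nonneg (cf_nonneg _ _)]
      refine le_trans ?_ (le_abs_self _)
      simp only [Function.comp, cf]
      rw [Real.rpow_neg hm0.le, Real.rpow_two]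
      calc cf w m / m ≤ (hn m ^ w.length / m) / m := by gcongr; exact cf_bound w hw m
        _ ≤ ((1 + Real.log m)^w.length / m) / m := by
          gcongr
          · exact hn_nonneg _
          · exact hn_le m
        _ = _ := by field_simp
    · filter_upwards [Filter.eventually_ge_atTop 1] with m hm
      have hm0 : (0:ℝ) < m := by exact_mod_cast hm
      simp only [Function.comp]
      rw [one_mul, ← Real.rpow_add hm0]
      norm_num
  exact summable_of_isBigO_nat (Real.summable_nat_rpow.2 (by norm_num)) hO

end NSDS
namespace NSDS
open Letter

/-- admissible words -/
def Good0 (w : List Letter) : Prop := w = [] ∨ ∃ t, t ≠ [] ∧ Good t ∧ w = x :: t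

lemma Good0.good {w} (h : Good0 w) : Good w := by
  rcases h with h | ⟨t, ht, g, rfl⟩
  · exact Or.inl h
  · rcases g with g | ⟨v, rfl⟩
    · exact absurd g ht
    · exact Or.inr ⟨x :: v, rfl⟩

noncomputable def V : Submodule ℚ H := Submodule.span ℚ (wl '' {w | Good0 w})
noncomputable def E1 : Submodule ℚ H := Submodule.span ℚ (wl '' {w | Good w ∧ w ≠ []})
noncomputable def G1 : Submodule ℚ H := Submodule.span ℚ (wl '' {w | Good w})

lemma E1_le : E1 ≤ G1 := Submodule.span_mono (Set.image_mono fun _ h => h.1)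

lemma wl_mem_E1 {w} (h : Good w) (h' : w ≠ []) : wl w ∈ E1 :=
  Submodule.subset_span ⟨w, ⟨h, h'⟩, rfl⟩
lemma wl_mem_G1 {w} (h : Good w) : wl w ∈ G1 := Submodule.subset_span ⟨w, h, rfl⟩
lemma wl_mem_V {w} (h : Good0 w) : wl w ∈ V := Submodule.subset_span ⟨w, h, rfl⟩

lemma mul_mem_gen {A B : Set (List Letter)} (p : List Letter) (hp : ∀ w ∈ A, p ++ w ∈ B)
    {h : H} (hh : h ∈ Submodule.span ℚ (wl '' A)) : wl p * h ∈ Submodule.span ℚ (wl '' B) := by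
  induction hh using Submodule.span_induction with
  | mem a ha =>
    obtain ⟨w, hw, rfl⟩ := ha
    refine Submodule.subset_span ⟨p ++ w, hp w hw, ?_⟩
    rw [word_mul]; rfl
  | zero => simp
  | add a b _ _ ha hb => rw [mul_add]; exact add_mem ha hb
  | smul c a _ ha => rw [mul_smul_comm]; exact Submodule.smul_mem _ _ ha

lemma Good.append {p w} (h : Good w) (h' : w ≠ []) : Good (p ++ w) := by
  rcases h with h | ⟨v, rfl⟩
  · exact absurd h h'
  · exact Or.inr ⟨p ++ v, by simp⟩

lemma cons_E1 (u : Letter) {h : H} (hh : h ∈ E1) : word (FreeMonoid.of u) * h ∈ E1 :=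
  mul_mem_gen (A := {w | Good w ∧ w ≠ []}) (B := {w | Good w ∧ w ≠ []}) [u]
    (fun _ hw => ⟨hw.1.append hw.2, by simp⟩) hh

lemma x_E1 {h : H} (hh : h ∈ E1) : word (FreeMonoid.of x) * h ∈ V :=
  mul_mem_gen [x] (fun w hw => Or.inr ⟨w, hw.2, hw.1, rfl⟩) hh

lemma rep_good (n : ℕ) {w} (h : Good w) : Good (List.replicate n x ++ [y] ++ w) := by
  rcases h with rfl | ⟨v, rfl⟩
  · exact Or.inr ⟨List.replicate n x, by simp⟩
  · exact Or.inr ⟨List.replicate n x ++ [y] ++ v, by simp⟩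

lemma z_G1 (k : ℕ) {h : H} (hh : h ∈ G1) : z k * h ∈ G1 :=
  mul_mem_gen _ (fun _ hw => rep_good _ hw) hh

lemma z_V {k : ℕ} (hk : 2 ≤ k) {h : H} (hh : h ∈ G1) : z k * h ∈ V := by
  obtain ⟨n, rfl⟩ := Nat.exists_eq_add_of_le' hk
  refine mul_mem_gen _ (fun w hw => ?_) hh
  refine Or.inr ⟨List.replicate n x ++ [y] ++ w, by simp, rep_good n hw, ?_⟩
  simp [List.replicate_succ]

lemma nsh_E1 (n : ℕ) : ∀ a b : List Letter, a.length + b.length ≤ n → Good a → Good b →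
    (a ≠ [] ∨ b ≠ []) → nshW a b ∈ E1 := by
  induction n with
  | zero =>
    intro a b h _ _ h'
    have ha : a = [] := by apply List.eq_nil_of_length_eq_zero; omega
    have hb : b = [] := by apply List.eq_nil_of_length_eq_zero; omega
    simp [ha, hb] at h'
  | succ n ih =>
    intro a b h ga gb h'
    match a, b with
    | [], b => rw [nshW]; exact wl_mem_E1 gb (by simpa using h')
    | u :: w, [] => rw [nshW]; exact wl_mem_E1 ga (by simp)
    | u :: w, v :: t =>
      simp only [List.length_cons] at h
      rw [nshW]
      refine sub_mem (sub_mem (add_mem (cons_E1 _ (ih _ _ (by simp; omega) ga.tail gb (by simp)))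
        (cons_E1 _ (ih _ _ (by simp; omega) ga gb.tail (by simp)))) ?_) ?_
      · exact Submodule.smul_mem _ _ (wl_mem_E1 (gb.append (p := [_]) (by simp)) (by simp))
      · exact Submodule.smul_mem _ _ (wl_mem_E1 (ga.append (p := [_]) (by simp)) (by simp))

lemma nsh_V {a b : List Letter} (ha : Good0 a) (hb : Good0 b) : nshW a b ∈ V := by
  have ha' := ha
  have hb' := hb
  rcases ha with rfl | ⟨s, hs, gs, rfl⟩
  · rw [nshW]; exact wl_mem_V hb
  rcases hb with rfl | ⟨t, ht, gt, rfl⟩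
  · rw [nshW]; exact wl_mem_V ha'
  rw [nshW, δ_eq, δ_eq, if_neg hs, if_neg ht, zero_smul, zero_smul, sub_zero, sub_zero]
  exact add_mem (x_E1 (nsh_E1 _ _ _ le_rfl gs hb'.good (by simp)))
    (x_E1 (nsh_E1 _ _ _ le_rfl ha'.good gt (by simp)))

lemma zl_good (ks) : Good (zl ks) := by
  induction ks with
  | nil => exact Or.inl rfl
  | cons k ks ih => rw [zl_cons]; simpa using rep_good (k-1) ih

lemma nharm_G1 (n : ℕ) : ∀ a b : List ℕ, a.length + b.length ≤ n → nharmW a b ∈ G1 := by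
  induction n with
  | zero =>
    intro a b h
    have ha : a = [] := by apply List.eq_nil_of_length_eq_zero; omega
    subst ha
    rw [nharmW]; exact wl_mem_G1 (zl_good b)
  | succ n ih =>
    intro a b h
    match a, b with
    | [], b => rw [nharmW]; exact wl_mem_G1 (zl_good b)
    | k :: a, [] => rw [nharmW]; exact wl_mem_G1 (zl_good (k :: a))
    | k :: a, l :: b =>
      simp only [List.length_cons] at h
      rw [nharmW]
      exact sub_mem (add_mem (z_G1 _ (ih _ _ (by simp; omega))) (z_G1 _ (ih _ _ (by simp; omega))))
        (z_G1 _ (ih _ _ (by omega)))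

lemma nharm_V {a b : List ℕ} (ha : Good0 (zl a)) (hb : Good0 (zl b)) : nharmW a b ∈ V := by
  have head : ∀ k ks, Good0 (zl (k :: ks)) → 2 ≤ k := by
    intro k ks h
    by_contra hk
    have h0 : k - 1 = 0 := by omega
    rw [zl_cons, h0] at h
    rcases h with h | ⟨t, _, _, h⟩ <;> simp at h
  match a, b with
  | [], b => rw [nharmW]; exact wl_mem_V hb
  | k :: a, [] => rw [nharmW]; exact wl_mem_V ha
  | k :: a, l :: b =>
    have hk := head _ _ ha
    have hl := head _ _ hb
    rw [nharmW]
    exact sub_mem (add_mem (z_V hk (nharm_G1 _ _ _ le_rfl)) (z_V hl (nharm_G1 _ _ _ le_rfl)))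
        (z_V (by omega) (nharm_G1 _ _ _ le_rfl))

/-- partial sums -/
noncomputable def PN (N : ℕ) : H →ₗ[ℚ] ℝ :=
  ∑ j ∈ Finset.range (N+1), ((PowerSeries.coeff (R := ℝ) j).restrictScalars ℚ).comp Lm

lemma PN_apply (N h) : PN N h = ∑ j ∈ Finset.range (N+1), PowerSeries.coeff j (Lm h) := by
  simp [PN]

lemma coeff_wl (w m) : PowerSeries.coeff m (Lm (wl w)) = cf w m := by
  simp [Lm_word, pl]

lemma coeff_z {k : ℕ} (hk : 1 ≤ k) (m : ℕ) (h : H) :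
    PowerSeries.coeff m (Lm (z k * h)) = ((m : ℝ)^k)⁻¹ * PN m h := by
  let A : H →ₗ[ℚ] ℝ :=
    ((PowerSeries.coeff (R := ℝ) m).restrictScalars ℚ).comp (Lm.comp (LinearMap.mulLeft ℚ (z k)))
  let B : H →ₗ[ℚ] ℝ := ((LinearMap.mulLeft ℝ ((m : ℝ)^k)⁻¹).restrictScalars ℚ).comp (PN m)
  have : A = B := by
    apply lin_ext
    intro w
    have e : z k * word w = wl (List.replicate (k-1) x ++ y :: w.toList) := by
      rw [z, word_mul, zW, wl, List.append_cons _ y w.toList, FreeMonoid.ofList_append]; rfl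
    have e' : PN m (word w) = ∑ j ∈ Finset.range (m+1), cf w.toList j := by
      rw [PN_apply]; exact Finset.sum_congr rfl fun j _ => coeff_wl _ _
    change PowerSeries.coeff m (Lm (z k * word w)) = ((m : ℝ)^k)⁻¹ * PN m (word w)
    rw [e, e', coeff_wl, cf_rep, Nat.sub_add_cancel hk]
  exact LinearMap.congr_fun this h

lemma sum_prod (a b : ℕ → ℝ) (N : ℕ) :
    (∑ m ∈ Finset.range (N+1), a m) * (∑ m ∈ Finset.range (N+1), b m) =
    ∑ m ∈ Finset.range (N+1), (a m * (∑ j ∈ Finset.range (m+1), b j) +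
      (∑ j ∈ Finset.range (m+1), a j) * b m - a m * b m) := by
  induction N with
  | zero => simp
  | succ N ih =>
    rw [Finset.sum_range_succ _ (N+1), Finset.sum_range_succ _ (N+1),
      Finset.sum_range_succ _ (N+1), ← ih, Finset.sum_range_succ _ (N+1),
      Finset.sum_range_succ _ (N+1)]
    ring

theorem harmonic_prod (n : ℕ) : ∀ a b : List ℕ, a.length + b.length ≤ n →
    (∀ k ∈ a, 1 ≤ k) → (∀ k ∈ b, 1 ≤ k) → ∀ N,
    PN N (nharmW a b) = PN N (wl (zl a)) * PN N (wl (zl b)) := by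
  have h1 : ∀ N, PN N (wl (zl [])) = 1 := by
    intro N; rw [PN_apply]; simp only [coeff_wl]; simp [zl, cf]
  have hz : ∀ k ks, wl (zl (k :: ks)) = z k * wl (zl ks) := by
    intro k ks
    rw [z, word_mul]; rw [zl_cons, zW, wl, List.append_cons _ y (zl ks), FreeMonoid.ofList_append]
  induction n with
  | zero =>
    intro a b h _ _ N
    have ha : a = [] := by apply List.eq_nil_of_length_eq_zero; omega
    subst ha
    rw [nharmW, h1, one_mul]; rfl
  | succ n ih =>
    intro a b h pa pb N
    match a, b with
    | [], b => rw [nharmW, h1, one_mul]; rfl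
    | k :: a, [] => rw [nharmW, h1, mul_one]; rfl
    | k :: a, l :: b =>
      simp only [List.length_cons] at h
      have hk : 1 ≤ k := pa k (by simp)
      have hl : 1 ≤ l := pb l (by simp)
      have pa' : ∀ k ∈ a, 1 ≤ k := fun k hk => pa k (by simp [hk])
      have pb' : ∀ k ∈ b, 1 ≤ k := fun k hk => pb k (by simp [hk])
      rw [PN_apply N (wl (zl (k :: a))), PN_apply N (wl (zl (l :: b))), sum_prod, PN_apply]
      apply Finset.sum_congr rfl
      intro m _
      rw [← PN_apply, ← PN_apply, nharmW, map_sub, map_add, map_sub, map_add, coeff_z hk,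
        coeff_z hl, coeff_z (by omega), ih _ _ (by simp; omega) pa' pb,
        ih _ _ (by simp; omega) pa pb', ih _ _ (by omega) pa' pb']
      have ea : PowerSeries.coeff m (Lm (wl (zl (k :: a)))) = ((m : ℝ)^k)⁻¹ * PN m (wl (zl a)) := by
        rw [hz, coeff_z hk]
      have eb : PowerSeries.coeff m (Lm (wl (zl (l :: b)))) = ((m : ℝ)^l)⁻¹ * PN m (wl (zl b)) := by
        rw [hz, coeff_z hl]
      rw [ea, eb, pow_add, mul_inv]
      ring

lemma toZ_pos (w : FreeMonoid Letter) : ∀ k ∈ H.toZ w, 1 ≤ k := toZAux_pos _ _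

lemma hasSum_word {w : List Letter} (hw : Good0 w) : HasSum (cf w) (Zbar (wl w)) := by
  have hs : Summable (cf w) := by
    rcases hw with rfl | ⟨t, ht, _, rfl⟩
    · apply summable_of_ne_finset_zero (s := {0})
      intro m hm
      simp at hm
      simp [cf, hm]
    · exact cf_summable t ht
  have : Zbar (wl w) = ∑' m, cf w m := by
    rw [Zbar_eq, lin_word, nmzeta_eq _ (toZ_pos _), zl_toZ _ (by simpa using hw.good)]
    rfl
  rw [this]; exact hs.hasSum

lemma hasSum_V {h : H} (hh : h ∈ V) :
    HasSum (fun m => PowerSeries.coeff m (Lm h)) (Zbar h) := by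
  induction hh using Submodule.span_induction with
  | mem a ha =>
    obtain ⟨w, hw, rfl⟩ := ha
    simp only [coeff_wl]
    exact hasSum_word hw
  | zero => rw [Zbar_eq]; simp [hasSum_zero]
  | add a b _ _ ha hb =>
    rw [Zbar_eq] at *
    simp only [map_add]; exact ha.add hb
  | smul c a _ ha =>
    rw [Zbar_eq] at *
    have h1 : ∀ m, PowerSeries.coeff m (Lm (c • a)) = (c : ℝ) * PowerSeries.coeff m (Lm a) := by
      intro m
      have : PowerSeries.coeff m (Lm (c • a)) = c • PowerSeries.coeff m (Lm a) := by
        rw [map_smul]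
        exact map_smul ((PowerSeries.coeff (R := ℝ) m).restrictScalars ℚ) c (Lm a)
      rw [this, Rat.smul_def]
    simp only [h1]
    rw [map_smul, Rat.smul_def]
    exact ha.mul_left _

lemma shuffle_Z {a b : List Letter} (ha : Good0 a) (hb : Good0 b) :
    Zbar (nshW a b) = Zbar (wl a) * Zbar (wl b) := by
  have h := hasSum_V (nsh_V ha hb)
  have sa := hasSum_word ha
  have sb := hasSum_word hb
  rw [shuffle _ a b le_rfl ha.good hb.good] at h
  rw [← h.tsum_eq, ← sa.tsum_eq, ← sb.tsum_eq]
  rw [tsum_mul_tsum_eq_tsum_sum_antidiagonal_of_summable_norm]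
  · apply tsum_congr; intro m
    rw [PowerSeries.coeff_mul]
    simp only [coeff_wl]
  · exact sa.summable.norm
  · exact sb.summable.norm

lemma tendsto_PN {h : H} (hh : h ∈ V) :
    Filter.Tendsto (fun N => PN N h) Filter.atTop (nhds (Zbar h)) := by
  have := (hasSum_V hh).tendsto_sum_nat.comp (Filter.tendsto_add_atTop_nat 1)
  refine this.congr fun N => ?_
  rw [PN_apply]; rfl

lemma harm_Z {a b : List ℕ} (ha : Good0 (zl a)) (hb : Good0 (zl b))
    (pa : ∀ k ∈ a, 1 ≤ k) (pb : ∀ k ∈ b, 1 ≤ k) :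
    Zbar (nharmW a b) = Zbar (wl (zl a)) * Zbar (wl (zl b)) := by
  refine tendsto_nhds_unique (tendsto_PN (nharm_V ha hb)) ?_
  refine ((tendsto_PN (wl_mem_V ha)).mul (tendsto_PN (wl_mem_V hb))).congr fun N => ?_
  rw [harmonic_prod _ a b le_rfl pa pb]

lemma words_eq {v w : FreeMonoid Letter} (hv : Good0 v.toList) (hw : Good0 w.toList) :
    Zbar (nharmW (H.toZ v) (H.toZ w)) = Zbar (nshW v.toList w.toList) := by
  have ev := zl_toZ v hv.good
  have ew := zl_toZ w hw.good
  rw [harm_Z (by rwa [ev]) (by rwa [ew]) (toZ_pos _) (toZ_pos _), ev, ew,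
    shuffle_Z hv hw]

lemma H0_le : H0 ≤ V := by
  unfold H0
  refine sup_le ?_ ?_
  · rintro _ ⟨h, rfl⟩
    induction h using MonoidAlgebra.induction_linear with
    | zero => simp
    | add a b ha hb => rw [map_add]; exact add_mem ha hb
    | single w c =>
      have : MonoidAlgebra.single w c = c • word w := by simp [word]
      rw [this, map_smul]
      apply Submodule.smul_mem
      change X * word w * Y ∈ V
      have e : X * word w * Y = wl (x :: (w.toList ++ [y])) := by
        rw [X, Y, word_mul, word_mul]; rfl
      rw [e]
      exact wl_mem_V (Or.inr ⟨_, by simp, Or.inr ⟨_, rfl⟩, rfl⟩)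
  · rw [Submodule.span_le]
    rintro _ rfl
    exact wl_mem_V (w := []) (Or.inl rfl)

lemma V_support {h : H} (hh : h ∈ V) : ∀ w ∈ h.coeff.support, Good0 w.toList := by
  have key : ∀ w : FreeMonoid Letter, ¬ Good0 w.toList → h.coeff w = 0 := by
    intro w hw
    induction hh using Submodule.span_induction with
    | mem a ha =>
      obtain ⟨v, hv, rfl⟩ := ha
      have : FreeMonoid.ofList v ≠ w := by rintro rfl; exact hw hv
      simp [word, this]
    | zero => simp
    | add a b _ _ ha hb => simp [ha, hb]
    | smul c a _ ha => simp [ha]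
  intro w hw
  by_contra h'
  exact (Finsupp.mem_support_iff.1 hw) (key w h')

end NSDS


/-- Finite double shuffle relations for non-strict multiple zeta values:
`Z̄(w₁ *̄ w₂ − w₁ ш̄ w₂) = 0` for all `w₁, w₂ ∈ H⁰`. -/
theorem finite_double_shuffle :
    ∀ w1 ∈ H0, ∀ w2 ∈ H0, Zbar (nharm w1 w2 - nsh w1 w2) = 0 := by
  intro a ha b hb
  have sa := NSDS.V_support (NSDS.H0_le ha)
  have sb := NSDS.V_support (NSDS.H0_le hb)
  rw [NSDS.Zbar_eq, map_sub, sub_eq_zero]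
  unfold nharm nsh
  simp only [map_finsuppSum, map_smul]
  refine Finsupp.sum_congr fun v hv => Finsupp.sum_congr fun w hw => ?_
  rw [← NSDS.Zbar_eq, ← NSDS.Zbar_eq, NSDS.words_eq (sa v hv) (sb w hw)]
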